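/- Let k be a positive squarefree natural number. Then the ring ℤ/kℤ of integers modulo k can be expanded to a meadow: there exists a function i : ℤ/kℤ → ℤ/kℤ satisfying Ref: i(i(x)) = x for all x, and Ril: x·(x·i(x)) = x for all x. (This is the content of the theorem that for squarefree k the initial meadow Md_k of characteristic k has exactly k elements, namely 0, 1, ..., k−1 with arithmetic modulo k.) -/

import Mathlib

/-!
A reduced commutative ring of Krull dimension at most zero becomes a field at each maximal ideal,
so `x` lies in the ideal `(x * x)` locally, hence globally: every `x` satisfies `x * (x * y) = x`
for some `y`. Then `y * (x * y)` is a generalized inverse of `x`. Generalized inverses in a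
commutative semigroup are unique and the relation is symmetric, so choosing them gives an
involution.
-/

/-- `y` is a generalized inverse of `x`: the commutative form of the equations `x * y * x = x` and
`y * x * y = y` defining inverses in semigroup theory. The first one is bracketed as in the
restricted inverse law of meadows, the second one makes the relation symmetric. -/
def IsGeneralizedInverse {S : Type*} [CommSemigroup S] (x y : S) : Prop :=
  x * (x * y) = x ∧ y * (y * x) = y

namespace IsGeneralizedInverse

variable {S : Type*} [CommSemigroup S] {x y z : S}

theorem symm (h : IsGeneralizedInverse x y) : IsGeneralizedInverse y x :=
  And.symm h

theorem unique (hy : IsGeneralizedInverse x y) (hz : IsGeneralizedInverse x z) : y = z := by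
  have mul_eq_mul : x * y = x * z :=
    calc x * y = x * (x * z) * y := by rw [hz.1]
      _ = x * (x * y) * z := by ac_rfl
      _ = x * z := by rw [hy.1]
  calc y = y * (x * y) := by rw [mul_comm x y, hy.2]
    _ = y * x * z := by rw [mul_eq_mul, mul_assoc]
    _ = z * (z * x) := by rw [mul_comm y x, mul_eq_mul]; ac_rfl
    _ = z := hz.2

theorem of_mul_mul_eq (h : x * (x * y) = x) : IsGeneralizedInverse x (y * (x * y)) := by
  constructor
  · calc x * (x * (y * (x * y))) = x * (x * y) * (x * y) := by ac_rfl
      _ = x := by rw [h, h]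
  · calc y * (x * y) * (y * (x * y) * x) = x * (x * y) * (x * y) * (y * y) := by ac_rfl
      _ = y * (x * y) := by rw [h, h]; ac_rfl

end IsGeneralizedInverse

theorem exists_involutive_of_forall_exists_mul_mul_eq {S : Type*} [CommSemigroup S]
    (h : ∀ x : S, ∃ y, x * (x * y) = x) :
    ∃ i : S → S, (∀ x, i (i x) = x) ∧ ∀ x, x * (x * i x) = x := by
  choose y hy using h
  have isGeneralizedInverse (x : S) := IsGeneralizedInverse.of_mul_mul_eq (hy x)
  exact ⟨fun x ↦ y x * (x * y x),
    fun x ↦ (isGeneralizedInverse _).unique (isGeneralizedInverse x).symm,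
    fun x ↦ (isGeneralizedInverse x).1⟩

theorem exists_mul_mul_eq_of_isField {R : Type*} [Semiring R] (hR : IsField R) (x : R) :
    ∃ y, x * (x * y) = x := by
  obtain rfl | hx := eq_or_ne x 0
  · exact ⟨0, zero_mul _⟩
  · obtain ⟨y, hxy⟩ := hR.mul_inv_cancel hx
    exact ⟨y, by rw [hxy, mul_one]⟩

section KrullDimLE

variable {R : Type*} [CommRing R] [IsReduced R] [Ring.KrullDimLE 0 R]

theorem isField_localization_atPrime_of_krullDimLE_zero (p : Ideal R) [p.IsPrime] :
    IsField (Localization.AtPrime p) :=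
  have : Ring.KrullDimLE 0 (Localization.AtPrime p) :=
    .of_isLocalization p (Ideal.mem_minimalPrimes_iff_isPrime.mpr inferInstance) _
  Ring.KrullDimLE.isField_of_isReduced

theorem exists_mul_mul_eq_of_krullDimLE_zero (x : R) : ∃ y, x * (x * y) = x := by
  suffices hx : x ∈ Ideal.span {x * x} by
    obtain ⟨y, hy⟩ := Ideal.mem_span_singleton'.mp hx
    exact ⟨y, by rw [← mul_assoc, mul_comm, hy]⟩
  refine Ideal.mem_of_localization_maximal fun p _ ↦ ?_
  obtain ⟨y, hy⟩ := exists_mul_mul_eq_of_isField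
    (isField_localization_atPrime_of_krullDimLE_zero p) (algebraMap R (Localization.AtPrime p) x)
  rw [Ideal.map_span, Set.image_singleton, map_mul, Ideal.mem_span_singleton]
  exact ⟨y, by rw [mul_assoc, hy]⟩

end KrullDimLE

theorem zmod_squarefree_meadow_general (R : Type*) [CommRing R] [IsReduced R]
    [Ring.KrullDimLE 0 R] :
    ∃ i : R → R, (∀ x : R, i (i x) = x) ∧ (∀ x : R, x * (x * i x) = x) :=
  exists_involutive_of_forall_exists_mul_mul_eq exists_mul_mul_eq_of_krullDimLE_zero

theorem zmod_squarefree_meadow (k : ℕ) (hk : 0 < k) (hsf : Squarefree k) :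
    ∃ i : ZMod k → ZMod k,
      (∀ x : ZMod k, i (i x) = x) ∧ (∀ x : ZMod k, x * (x * i x) = x) := by
  have : NeZero k := ⟨hk.ne'⟩
  have : IsReduced (ZMod k) := isReduced_zmod.mpr (.inl hsf)
  exact zmod_squarefree_meadow_general (ZMod k)
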